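/- arXiv:1612.03427 — 3 statements merged into one kernel-verified Lean document; each statement's English description precedes it below -/
import Mathlib

section
/- Let ρ_A be a state of a 4-level system with eigenvalues p_1 ≥ p_2 ≥ p_3 ≥ p_4. Let C_4(ρ_A) = sup tr(ρ_A T)/2, the supremum over all 4-tuples (A_1,A_2,A_3,A_4) of Hermitian involutions on ℂ⁴ with [A_1,A_2] = [A_2,A_3] = [A_3,A_4] = [A_4,A_1] = 0, where T = A_1(A_2+A_4) + A_3(A_2−A_4). Then C_4(ρ_A) = max{ 1, √(2[(p_1−p_4)² + (p_2−p_3)²]) }. In particular C_4 attains its maximum value √2 on pure states. -/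
/-!
Conjugating by a unitary, `ρ` may be taken to be `diagonal p` with `p` decreasing
(`exists_unitary_diagonal_eigDesc`, `conj_mem_chshValues`), so that `tr(ρ T) = ∑ pⱼ Tⱼⱼ`.

*Upper bound* (`chsh_diagonal_le`). With `K = [A₁, A₃]` and `L = [A₂, A₄]` one has `T² = 4 - K L`
(`chsh_sq`). If `K L = 0`, then `T² = 4`, so the diagonal entries of `T` are at most `2` and the
value is at most `1`. If `K L ≠ 0`, take a joint eigenvector `v` of `K` and `L` with nonzero
eigenvalues `k`, `l`. Since `A₁` anticommutes with `K` and commutes with `L`, and `A₂` does the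
opposite, the vectors `v, A₁v, A₂v, A₁A₂v` have the four distinct joint eigenvalues `(±k, ±l)`.
In dimension four they form a basis, whence `K²` and `(K L)²` are nonzero scalars
(`commutator_dichotomy`); say `(K L)² = m²` with `m > 0`. On the two spectral subspaces of `K L`,
both two-dimensional, `T²` is `a² = 4 + m` and `b² = 4 - m`, and `T` has trace zero there because
it anticommutes with the invertible `K`: the eigenvalues of `T` are `a, b, -b, -a`. The rearrangement
inequality `∑ pⱼ Tⱼⱼ ≤ a (p₁ - p₄) + b (p₂ - p₃)` follows from bounds on diagonal entries
(`diag_bound`, `diag_sum_bound`), and Cauchy-Schwarz with `a² + b² = 8` finishes the proof.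

*Attainment* (`chsh_diagonal_attained`). The value `1` comes from four identity matrices. The other
value comes from two qubits written in the Bell basis, with `A₁ = Z₁`, `A₃ = X₁` and
`A₂, A₄ = c Z₂ ± s X₂`, so that `T = 2 c Z₁Z₂ + 2 s X₁X₂` is diagonal.

A pure state is a rank-one projection, so its ordered eigenvalues are `1, 0, 0, 0`.
-/


open Matrix
open scoped ComplexOrder Classical

noncomputable section

def IsDensityMatrix {n : Type} [Fintype n] (ρ : Matrix n n ℂ) : Prop :=
  ρ.PosSemidef ∧ ρ.trace = 1

def pureState {n : Type} (ψ : n → ℂ) : Matrix n n ℂ :=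
  Matrix.vecMulVec ψ (star ψ)

def IsPureState {n : Type} [Fintype n] (ρ : Matrix n n ℂ) : Prop :=
  ∃ ψ : n → ℂ, star ψ ⬝ᵥ ψ = 1 ∧ ρ = pureState ψ

def eigMultiset {n : Type} [Fintype n] [DecidableEq n] {ρ : Matrix n n ℂ}
    (h : ρ.IsHermitian) : Multiset ℝ :=
  Finset.univ.val.map h.eigenvalues

def eigListDesc {n : Type} [Fintype n] [DecidableEq n] {ρ : Matrix n n ℂ}
    (h : ρ.IsHermitian) : List ℝ :=
  ((eigMultiset h).sort (· ≤ ·)).reverse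

/-- The `i`-th largest eigenvalue. -/
def eigDesc {d : ℕ} {ρ : Matrix (Fin d) (Fin d) ℂ} (h : ρ.IsHermitian) : Fin d → ℝ :=
  fun i => (eigListDesc h).getD i 0

/-- The CHSH quantity `C₄(ρ_A) = sup tr(ρ_A T)/2` over tuples of Hermitian involutions
on `ℂ⁴` with `[A₁,A₂] = [A₂,A₃] = [A₃,A₄] = [A₄,A₁] = 0`, where
`T = A₁(A₂+A₄) + A₃(A₂−A₄)`. -/
def C4 (ρA : Matrix (Fin 4) (Fin 4) ℂ) : ℝ :=
  sSup { r : ℝ | ∃ A₁ A₂ A₃ A₄ : Matrix (Fin 4) (Fin 4) ℂ,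
    A₁.IsHermitian ∧ A₂.IsHermitian ∧ A₃.IsHermitian ∧ A₄.IsHermitian ∧
    A₁ * A₁ = 1 ∧ A₂ * A₂ = 1 ∧ A₃ * A₃ = 1 ∧ A₄ * A₄ = 1 ∧
    Commute A₁ A₂ ∧ Commute A₂ A₃ ∧ Commute A₃ A₄ ∧ Commute A₄ A₁ ∧
    r = ((ρA * (A₁ * (A₂ + A₄) + A₃ * (A₂ - A₄))).trace).re / 2 }

/-- The numbers `tr(ρ T) / 2` whose supremum is `C4 ρ`. -/
def chshValues (ρ : Matrix (Fin 4) (Fin 4) ℂ) : Set ℝ :=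
  { r | ∃ A₁ A₂ A₃ A₄ : Matrix (Fin 4) (Fin 4) ℂ,
    A₁.IsHermitian ∧ A₂.IsHermitian ∧ A₃.IsHermitian ∧ A₄.IsHermitian ∧
    A₁ * A₁ = 1 ∧ A₂ * A₂ = 1 ∧ A₃ * A₃ = 1 ∧ A₄ * A₄ = 1 ∧
    Commute A₁ A₂ ∧ Commute A₂ A₃ ∧ Commute A₃ A₄ ∧ Commute A₄ A₁ ∧
    r = ((ρ * (A₁ * (A₂ + A₄) + A₃ * (A₂ - A₄))).trace).re / 2 }

theorem C4_eq_sSup (ρ : Matrix (Fin 4) (Fin 4) ℂ) : C4 ρ = sSup (chshValues ρ) := rfl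

/-! ### Algebra of the CHSH operator -/

section chshRing
variable {R : Type*} [Ring R] {a₁ a₂ a₃ a₄ : R}

theorem comm_anticomm_left (h₁ : a₁ * a₁ = 1) :
    (a₁ * a₃ - a₃ * a₁) * a₁ = -(a₁ * (a₁ * a₃ - a₃ * a₁)) := by
  have e : ∀ x, a₁ * (a₁ * x) = x := fun x => by rw [← mul_assoc, h₁, one_mul]
  simp only [mul_sub, sub_mul, mul_assoc, h₁, e, mul_one]
  abel

theorem comm_anticomm_right (h₃ : a₃ * a₃ = 1) :
    (a₁ * a₃ - a₃ * a₁) * a₃ = -(a₃ * (a₁ * a₃ - a₃ * a₁)) := by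
  have e : ∀ x, a₃ * (a₃ * x) = x := fun x => by rw [← mul_assoc, h₃, one_mul]
  simp only [mul_sub, sub_mul, mul_assoc, h₃, e, mul_one]
  abel

/-- The square of the CHSH operator (Landau's identity). -/
theorem chsh_sq (h₁ : a₁ * a₁ = 1) (h₂ : a₂ * a₂ = 1) (h₃ : a₃ * a₃ = 1) (h₄ : a₄ * a₄ = 1)
    (c₁₂ : Commute a₁ a₂) (c₂₃ : Commute a₂ a₃) (c₃₄ : Commute a₃ a₄) (c₄₁ : Commute a₄ a₁) :
    (a₁ * (a₂ + a₄) + a₃ * (a₂ - a₄)) * (a₁ * (a₂ + a₄) + a₃ * (a₂ - a₄)) =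
      4 - (a₁ * a₃ - a₃ * a₁) * (a₂ * a₄ - a₄ * a₂) := by
  -- the rules below move `a₁, a₃` to the left of `a₂, a₄` and cancel adjacent equal factors
  have x₁ : a₂ * a₁ = a₁ * a₂ := c₁₂.eq.symm
  have x₂ : a₂ * a₃ = a₃ * a₂ := c₂₃.eq
  have x₃ : a₄ * a₃ = a₃ * a₄ := c₃₄.eq.symm
  have x₄ : a₄ * a₁ = a₁ * a₄ := c₄₁.eq
  have y₁ : ∀ x, a₂ * (a₁ * x) = a₁ * (a₂ * x) := fun x => by
    rw [← mul_assoc, x₁, mul_assoc]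
  have y₂ : ∀ x, a₂ * (a₃ * x) = a₃ * (a₂ * x) := fun x => by
    rw [← mul_assoc, x₂, mul_assoc]
  have y₃ : ∀ x, a₄ * (a₃ * x) = a₃ * (a₄ * x) := fun x => by
    rw [← mul_assoc, x₃, mul_assoc]
  have y₄ : ∀ x, a₄ * (a₁ * x) = a₁ * (a₄ * x) := fun x => by
    rw [← mul_assoc, x₄, mul_assoc]
  have z₁ : ∀ x, a₁ * (a₁ * x) = x := fun x => by rw [← mul_assoc, h₁, one_mul]
  have z₃ : ∀ x, a₃ * (a₃ * x) = x := fun x => by rw [← mul_assoc, h₃, one_mul]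
  have four : (4 : R) = 1 + 1 + 1 + 1 := by norm_num
  simp only [mul_add, add_mul, mul_sub, sub_mul, mul_assoc, y₁, y₂, y₃, y₄,
    z₁, z₃, h₁, h₂, h₃, h₄, mul_one, four]
  abel
end chshRing

/-! ### Upper bound for a diagonal state -/

/-- If `H` is Hermitian with `H² = c² Q` for a projection `Q`, then `|H| = c Q`, so the diagonal
entries of `H` are dominated by those of `c Q`. Allowing `c = 0` is what makes it usable for the
singular spectral part of the CHSH operator. -/
theorem diag_bound {n : Type*} [Fintype n] {H Q : Matrix n n ℂ} (hH : H.IsHermitian)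
    (hQ : Q.IsHermitian) (hHQ : H * Q = H) (hQQ : Q * Q = Q) {c : ℝ} (hc : 0 ≤ c)
    (hHH : H * H = ((c ^ 2 : ℝ) : ℂ) • Q) (j : n) :
    0 ≤ (Q j j).re ∧ |(H j j).re| ≤ c * (Q j j).re := by
  have row : ∀ {X : Matrix n n ℂ}, X.IsHermitian → ((X * X) j j).re = ∑ k, ‖X j k‖ ^ 2 := by
    intro X hX
    rw [Matrix.mul_apply, Complex.re_sum]
    refine Finset.sum_congr rfl fun k _ => ?_
    rw [← hX.apply k j, ← Complex.normSq_eq_norm_sq, Complex.star_def, Complex.mul_conj,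
      Complex.ofReal_re]
  have hQs := row hQ
  have hHs := row hH
  rw [hQQ] at hQs
  rw [hHH, Matrix.smul_apply, smul_eq_mul, Complex.re_ofReal_mul] at hHs
  have hQ0 : 0 ≤ (Q j j).re := hQs ▸ Finset.sum_nonneg fun k _ => sq_nonneg _
  refine ⟨hQ0, (Complex.abs_re_le_norm _).trans ?_⟩
  have h1 : ‖H j j‖ ≤ ∑ k, ‖H j k‖ * ‖Q j k‖ := by
    conv_lhs => rw [← hHQ, Matrix.mul_apply]
    refine (norm_sum_le _ _).trans (Finset.sum_le_sum fun k _ => ?_)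
    rw [norm_mul, ← hQ.apply k j, norm_star]
  refine h1.trans (abs_le_of_sq_le_sq' ?_ (by positivity)).2
  refine (Finset.sum_mul_sq_le_sq_mul_sq _ _ _).trans (le_of_eq ?_)
  rw [← hHs, ← hQs]; ring

/-- The rigidity step, applied to `K = [A₁, A₃]` and `L = [A₂, A₄]`: if the product `K * L` does not
vanish, the four-dimensional space is a single joint two-qubit block, on which `K²` and `(K L)²` are
nonzero scalars. Only the (anti)commutation relations with `A₁` and `A₂` enter. -/
theorem commutator_dichotomy {A₁ A₂ K L : Matrix (Fin 4) (Fin 4) ℂ}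
    (h₁ : A₁ * A₁ = 1) (h₂ : A₂ * A₂ = 1) (hKL : Commute K L)
    (hM : (K * L).IsHermitian) (hM0 : K * L ≠ 0)
    (hK₁ : K * A₁ = -(A₁ * K)) (hK₂ : Commute K A₂) (hL₁ : Commute L A₁)
    (hL₂ : L * A₂ = -(A₂ * L)) :
    ∃ (m : ℝ) (k : ℂ), 0 < m ∧ k ≠ 0 ∧ K * K = k • 1 ∧
      (K * L) * (K * L) = ((m ^ 2 : ℝ) : ℂ) • 1 := by
  obtain ⟨i, hi⟩ : ∃ i, hM.eigenvalues i ≠ 0 := by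
    by_contra! h
    exact hM0 (hM.eigenvalues_eq_zero_iff.1 (funext h))
  set m := hM.eigenvalues i with hm
  have hmC : (m : ℂ) ≠ 0 := by exact_mod_cast hi
  -- `K` preserves the `m`-eigenspace of `K * L`, so it has an eigenvector there
  let E := Module.End.eigenspace (Matrix.toLin' (K * L)) (m : ℂ)
  have memE : ∀ w, w ∈ E ↔ (K * L) *ᵥ w = (m : ℂ) • w := fun w => by
    rw [Module.End.mem_eigenspace_iff, Matrix.toLin'_apply]
  have hinv : ∀ w ∈ E, Matrix.toLin' K w ∈ E := fun w hw => by
    rw [memE] at hw ⊢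
    rw [Matrix.toLin'_apply, Matrix.mulVec_mulVec, mul_assoc, ← hKL.eq, ← Matrix.mulVec_mulVec,
      hw, Matrix.mulVec_smul]
  have hne : Nontrivial E := by
    refine ⟨⟨⟨⇑(hM.eigenvectorBasis i), ?_⟩, 0, ?_⟩⟩
    · rw [memE, hM.mulVec_eigenvectorBasis]; rfl
    · intro h
      have h' := congrArg Subtype.val h
      refine (hM.eigenvectorBasis.orthonormal.ne_zero i) ?_
      ext j
      exact congrFun h' j
  obtain ⟨k, hk⟩ := Module.End.exists_eigenvalue ((Matrix.toLin' K).restrict hinv)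
  obtain ⟨⟨v, hvE⟩, hv⟩ := hk.exists_hasEigenvector
  have hv0 : v ≠ 0 := fun h => hv.2 (Subtype.ext h)
  have hKv : K *ᵥ v = k • v := by
    have := congrArg Subtype.val hv.apply_eq_smul
    simpa using this
  have hMv := (memE v).1 hvE
  have hLv' : k • (L *ᵥ v) = (m : ℂ) • v := by
    rw [← Matrix.mulVec_smul, ← hKv, Matrix.mulVec_mulVec, ← hKL.eq, hMv]
  have hk0 : k ≠ 0 := by
    rintro rfl
    rw [zero_smul] at hLv'
    exact (smul_ne_zero hmC hv0) hLv'.symm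
  obtain ⟨l, hl0, hLv⟩ : ∃ l : ℂ, l ≠ 0 ∧ L *ᵥ v = l • v :=
    ⟨k⁻¹ * m, mul_ne_zero (inv_ne_zero hk0) hmC, by
      rw [mul_smul, ← hLv', smul_smul, inv_mul_cancel₀ hk0, one_smul]⟩
  have inj : ∀ {A : Matrix (Fin 4) (Fin 4) ℂ}, A * A = 1 → ∀ w, A *ᵥ w = 0 → w = 0 :=
    fun {A} hA w hw => by
      rw [← Matrix.one_mulVec w, ← hA, ← Matrix.mulVec_mulVec, hw, Matrix.mulVec_zero]
  set v₁ := A₁ *ᵥ v with hv₁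
  set v₂ := A₂ *ᵥ v with hv₂
  set v₃ := A₁ *ᵥ v₂ with hv₃
  have hKv₁ : K *ᵥ v₁ = -(k • v₁) := by
    rw [hv₁, Matrix.mulVec_mulVec, hK₁, Matrix.neg_mulVec, ← Matrix.mulVec_mulVec, hKv,
      Matrix.mulVec_smul]
  have hKv₂ : K *ᵥ v₂ = k • v₂ := by
    rw [hv₂, Matrix.mulVec_mulVec, hK₂.eq, ← Matrix.mulVec_mulVec, hKv, Matrix.mulVec_smul]
  have hKv₃ : K *ᵥ v₃ = -(k • v₃) := by
    rw [hv₃, Matrix.mulVec_mulVec, hK₁, Matrix.neg_mulVec, ← Matrix.mulVec_mulVec, hKv₂,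
      Matrix.mulVec_smul]
  have hLv₁ : L *ᵥ v₁ = l • v₁ := by
    rw [hv₁, Matrix.mulVec_mulVec, hL₁.eq, ← Matrix.mulVec_mulVec, hLv, Matrix.mulVec_smul]
  have hLv₂ : L *ᵥ v₂ = -(l • v₂) := by
    rw [hv₂, Matrix.mulVec_mulVec, hL₂, Matrix.neg_mulVec, ← Matrix.mulVec_mulVec, hLv,
      Matrix.mulVec_smul]
  have hLv₃ : L *ᵥ v₃ = -(l • v₃) := by
    rw [hv₃, Matrix.mulVec_mulVec, hL₁.eq, ← Matrix.mulVec_mulVec, hLv₂, Matrix.mulVec_neg,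
      Matrix.mulVec_smul]
  have n₁ : v₁ ≠ 0 := fun h => hv0 (inj h₁ _ h)
  have n₂ : v₂ ≠ 0 := fun h => hv0 (inj h₂ _ h)
  have n₃ : v₃ ≠ 0 := fun h => n₂ (inj h₁ _ h)
  -- `v, v₁, v₂, v₃` have distinct joint eigenvalues `(±k, ±l)`, so the matrix `V` with these columns
  -- is invertible
  let V : Matrix (Fin 4) (Fin 4) ℂ := (Matrix.of ![v, v₁, v₂, v₃])ᵀ
  have Vmul : ∀ c : Fin 4 → ℂ, V *ᵥ c = c 0 • v + c 1 • v₁ + c 2 • v₂ + c 3 • v₃ := by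
    intro c
    ext j
    simp [V, Matrix.mulVec, dotProduct, Fin.sum_univ_four, mul_comm]
  have Vinj : ∀ c : Fin 4 → ℂ, V *ᵥ c = 0 → c = 0 := by
    intro c hc
    rw [Vmul] at hc
    have split : ∀ x y : Fin 4 → ℂ, x + y = 0 → x - y = 0 → x = 0 ∧ y = 0 := by
      intro x y h h'
      have hx : x = y := sub_eq_zero.1 h'
      subst hx
      have : x = 0 := by
        ext j
        have := congrFun h j
        simp only [Pi.add_apply, Pi.zero_apply] at this ⊢
        linear_combination this / 2
      exact ⟨this, this⟩
    -- applying `k⁻¹ K` and then `l⁻¹ L` to a linear relation separates its four terms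
    have hK := congrArg (fun x => k⁻¹ • (K *ᵥ x)) hc
    simp only [Matrix.mulVec_add, Matrix.mulVec_smul, hKv, hKv₁, hKv₂, hKv₃, Matrix.mulVec_zero,
      smul_zero, smul_add, smul_neg] at hK
    obtain ⟨e, f⟩ := split (c 0 • v + c 2 • v₂) (c 1 • v₁ + c 3 • v₃)
      (by rw [← hc]; abel)
      (by
        rw [← hK]
        simp only [smul_comm (c _) k, inv_smul_smul₀ hk0]
        abel)
    have hLe := congrArg (fun x => l⁻¹ • (L *ᵥ x)) e
    have hLf := congrArg (fun x => l⁻¹ • (L *ᵥ x)) f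
    simp only [Matrix.mulVec_add, Matrix.mulVec_smul, hLv, hLv₁, hLv₂, hLv₃, Matrix.mulVec_zero,
      smul_zero, smul_add, smul_neg, smul_comm (c _) l, inv_smul_smul₀ hl0] at hLe hLf
    rw [← sub_eq_add_neg] at hLe hLf
    obtain ⟨e₀, e₂⟩ := split _ _ e hLe
    obtain ⟨e₁, e₃⟩ := split _ _ f hLf
    ext j
    fin_cases j
    · exact (smul_eq_zero.1 e₀).resolve_right hv0
    · exact (smul_eq_zero.1 e₁).resolve_right n₁
    · exact (smul_eq_zero.1 e₂).resolve_right n₂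
    · exact (smul_eq_zero.1 e₃).resolve_right n₃
  have Vunit : IsUnit V := by
    rw [← Matrix.mulVec_injective_iff_isUnit]
    intro x y hxy
    exact sub_eq_zero.1 (Vinj _ (by rw [Matrix.mulVec_sub, sub_eq_zero]; exact hxy))
  have scalar : ∀ (X : Matrix (Fin 4) (Fin 4) ℂ) (x : ℂ), X *ᵥ v = x • v → X *ᵥ v₁ = x • v₁ →
      X *ᵥ v₂ = x • v₂ → X *ᵥ v₃ = x • v₃ → X = x • 1 := by
    intro X x e₀ e₁ e₂ e₃
    refine Vunit.mul_right_cancel (Matrix.ext_of_mulVec_single fun j => ?_)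
    rw [← Matrix.mulVec_mulVec, ← Matrix.mulVec_mulVec, Vmul]
    simp only [Matrix.mulVec_add, Matrix.mulVec_smul, e₀, e₁, e₂, e₃, Matrix.smul_mulVec,
      Matrix.one_mulVec]
  have mkl : (m : ℂ) = k * l := by
    have : (m : ℂ) • v = (k * l) • v := by rw [← hLv', hLv, smul_smul]
    exact smul_left_injective ℂ hv0 this
  refine ⟨|m|, k * k, abs_pos.2 hi, mul_ne_zero hk0 hk0, ?_, ?_⟩
  · refine scalar _ _ ?_ ?_ ?_ ?_ <;>
      simp only [← Matrix.mulVec_mulVec, hKv, hKv₁, hKv₂, hKv₃, Matrix.mulVec_smul,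
        Matrix.mulVec_neg, neg_neg, smul_smul, smul_neg]
  · rw [sq_abs]
    push_cast
    rw [mkl]
    refine scalar _ _ ?_ ?_ ?_ ?_ <;>
      simp only [← Matrix.mulVec_mulVec, hKv, hKv₁, hKv₂, hKv₃, hLv, hLv₁, hLv₂, hLv₃,
        Matrix.mulVec_smul, Matrix.mulVec_neg, neg_neg, smul_smul, smul_neg] <;>
      congr 1 <;> ring

/-- Rearrangement bound for `∑ pⱼ Tⱼⱼ`, where `T` splits into two parts with spectra `{a, -a}` and
`{b, -b}`: here `t` and `u` are the diagonals of the two parts, `x` and `1 - x` those of the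
corresponding spectral projections. -/
theorem diag_sum_bound {p : Fin 4 → ℝ} (hp : Antitone p) {a b : ℝ} (ha : 0 < a) (hb : 0 ≤ b)
    (hba : b ≤ a) {x t u : Fin 4 → ℝ} (hxs : ∑ j, x j = 2) (ht : ∀ j, |t j| ≤ a * x j) (hts : ∑ j, t j = 0)
    (hu : ∀ j, |u j| ≤ b * (1 - x j)) (hus : ∑ j, u j = 0) :
    ∑ j, p j * (t j + u j) ≤ a * (p 0 - p 3) + b * (p 1 - p 2) := by
  have p01 : p 1 ≤ p 0 := hp (by decide)
  have p12 : p 2 ≤ p 1 := hp (by decide)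
  have p23 : p 3 ≤ p 2 := hp (by decide)
  -- `t + u = (a - b) w + (b w + u)` with `w = t / a`: the first part has spectrum `{±(a - b)}`
  -- on its range, the second is bounded by `b` everywhere; each sum is then estimated separately
  obtain ⟨w, hw⟩ : ∃ w : Fin 4 → ℝ, ∀ j, t j = a * w j :=
    ⟨fun j => t j / a, fun j => by field_simp⟩
  have hwx : ∀ j, |w j| ≤ x j := fun j => by
    have := ht j
    rw [hw, abs_mul, abs_of_pos ha] at this
    exact le_of_mul_le_mul_left this ha
  have hws : ∑ j, w j = 0 := by
    have : a * ∑ j, w j = 0 := by rw [Finset.mul_sum, ← hts]; simp [hw]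
    exact (mul_eq_zero.1 this).resolve_left ha.ne'
  have hz : ∀ j, |b * w j + u j| ≤ b := fun j => by
    refine (abs_add_le _ _).trans ?_
    rw [abs_mul, abs_of_nonneg hb]
    nlinarith [hu j, mul_le_mul_of_nonneg_left (hwx j) hb]
  have s₁ : ∑ j, p j * w j ≤ p 0 - p 3 := by
    have e : ∀ j, p j * w j ≤ p 0 * ((x j + w j) / 2) - p 3 * ((x j - w j) / 2) := fun j => by
      have h0 : p j ≤ p 0 := hp (Fin.zero_le j)
      have h3 : p 3 ≤ p j := hp (Fin.le_last j)
      have := abs_le.1 (hwx j)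
      nlinarith [mul_nonneg (sub_nonneg.2 h0) (by linarith : 0 ≤ x j + w j),
        mul_nonneg (sub_nonneg.2 h3) (by linarith : 0 ≤ x j - w j)]
    refine (Finset.sum_le_sum fun j _ => e j).trans (le_of_eq ?_)
    simp only [Fin.sum_univ_four] at hxs hws ⊢
    linear_combination (p 0 - p 3) / 2 * hxs + (p 0 + p 3) / 2 * hws
  have s₂ : ∑ j, p j * (b * w j + u j) ≤ b * (p 0 + p 1 - p 2 - p 3) := by
    have zs : ∑ j, (b * w j + u j) = 0 := by
      rw [Finset.sum_add_distrib, ← Finset.mul_sum, hws, hus]; ring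
    generalize hzz : (fun j => b * w j + u j) = z at *
    have hz' : ∀ j, b * w j + u j = z j := fun j => congrFun hzz j
    simp only [hz'] at hz zs ⊢
    simp only [Fin.sum_univ_four] at zs ⊢
    have z0 := abs_le.1 (hz 0)
    have z1 := abs_le.1 (hz 1)
    have z2 := abs_le.1 (hz 2)
    have z3 := abs_le.1 (hz 3)
    have e0 := mul_nonneg (sub_nonneg.2 p01) (sub_nonneg.2 z0.2)
    have e3 := mul_nonneg (sub_nonneg.2 p23) (by linarith : 0 ≤ b + z 3)
    have e12 := mul_nonneg (sub_nonneg.2 p12) (by linarith : 0 ≤ 2 * b - z 0 - z 1)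
    have : z 3 = - z 0 - z 1 - z 2 := by linarith
    subst_vars
    rw [this] at e3 ⊢
    nlinarith
  have key : ∑ j, p j * (t j + u j) =
      (a - b) * ∑ j, p j * w j + ∑ j, p j * (b * w j + u j) := by
    rw [Finset.mul_sum, ← Finset.sum_add_distrib]
    exact Finset.sum_congr rfl fun j _ => by rw [hw]; ring
  rw [key]
  nlinarith [mul_le_mul_of_nonneg_left s₁ (sub_nonneg.2 hba)]

theorem trace_diagonal_mul_re (p : Fin 4 → ℝ) (T : Matrix (Fin 4) (Fin 4) ℂ) :
    ((diagonal (fun i => (p i : ℂ)) * T).trace).re = ∑ j, p j * (T j j).re := by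
  simp [Matrix.trace, Matrix.diagonal_mul, Complex.re_sum]

theorem chsh_diagonal_le {p : Fin 4 → ℝ} (hp : Antitone p) (hp0 : ∀ j, 0 ≤ p j)
    (hp1 : ∑ j, p j = 1) {A₁ A₂ A₃ A₄ : Matrix (Fin 4) (Fin 4) ℂ}
    (H₁ : A₁.IsHermitian) (H₂ : A₂.IsHermitian) (H₃ : A₃.IsHermitian) (H₄ : A₄.IsHermitian)
    (h₁ : A₁ * A₁ = 1) (h₂ : A₂ * A₂ = 1) (h₃ : A₃ * A₃ = 1) (h₄ : A₄ * A₄ = 1)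
    (c₁₂ : Commute A₁ A₂) (c₂₃ : Commute A₂ A₃) (c₃₄ : Commute A₃ A₄) (c₄₁ : Commute A₄ A₁) :
    ((diagonal (fun i => (p i : ℂ)) * (A₁ * (A₂ + A₄) + A₃ * (A₂ - A₄))).trace).re / 2 ≤
      max 1 (Real.sqrt (2 * ((p 0 - p 3) ^ 2 + (p 1 - p 2) ^ 2))) := by
  rw [trace_diagonal_mul_re]
  set K := A₁ * A₃ - A₃ * A₁ with hKdef
  set L := A₂ * A₄ - A₄ * A₂ with hLdef
  set T := A₁ * (A₂ + A₄) + A₃ * (A₂ - A₄) with hTdef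
  have hTT : T * T = 4 - K * L := chsh_sq h₁ h₂ h₃ h₄ c₁₂ c₂₃ c₃₄ c₄₁
  have hTH : T.IsHermitian := by
    rw [Matrix.IsHermitian, hTdef]
    simp only [conjTranspose_add, conjTranspose_sub, conjTranspose_mul, H₁.eq, H₂.eq, H₃.eq, H₄.eq]
    rw [(c₁₂.symm.add_left c₄₁).eq, (c₂₃.sub_left c₃₄.symm).eq]
  have KA₁ : K * A₁ = -(A₁ * K) := comm_anticomm_left h₁
  have KA₃ : K * A₃ = -(A₃ * K) := comm_anticomm_right h₃
  have LA₂ : L * A₂ = -(A₂ * L) := comm_anticomm_left h₂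
  have KA₂ : Commute K A₂ :=
    (c₁₂.mul_left c₂₃.symm).sub_left (c₂₃.symm.mul_left c₁₂)
  have KA₄ : Commute K A₄ :=
    (c₄₁.symm.mul_left c₃₄).sub_left (c₃₄.mul_left c₄₁.symm)
  have LA₁ : Commute L A₁ :=
    (c₁₂.symm.mul_left c₄₁).sub_left (c₄₁.mul_left c₁₂.symm)
  have KL : Commute K L := (KA₂.mul_right KA₄).sub_right (KA₄.mul_right KA₂)
  by_cases hM0 : K * L = 0
  · -- here `T * T = 4`, so the diagonal entries of `T` are at most `2`
    refine le_max_of_le_left ?_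
    have hb : ∀ j, (T j j).re ≤ 2 := fun j => by
      have := (diag_bound (c := 2) hTH (isHermitian_one) (mul_one _) (mul_one _) (by norm_num)
        (by rw [hTT, hM0, sub_zero]; ext i k; simp [Matrix.ofNat_apply, Matrix.one_apply]; norm_num) j).2
      simpa using (abs_le.1 this).2
    have : ∑ j, p j * (T j j).re ≤ ∑ j, p j * 2 :=
      Finset.sum_le_sum fun j _ => mul_le_mul_of_nonneg_left (hb j) (hp0 j)
    rw [← Finset.sum_mul, hp1] at this
    linarith
  refine le_max_of_le_right ?_
  have hMH : (K * L).IsHermitian := by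
    have hK : Kᴴ = -K := by
      rw [hKdef]; simp only [conjTranspose_sub, conjTranspose_mul, H₁.eq, H₃.eq, neg_sub]
    have hL : Lᴴ = -L := by
      rw [hLdef]; simp only [conjTranspose_sub, conjTranspose_mul, H₂.eq, H₄.eq, neg_sub]
    rw [Matrix.IsHermitian, conjTranspose_mul, hK, hL, neg_mul_neg, KL.eq]
  obtain ⟨m, k, hm, hk, hKK, hMM⟩ :=
    commutator_dichotomy h₁ h₂ KL hMH hM0 KA₁ KA₂ LA₁ LA₂
  have hKT : K * T = -(T * K) := by
    rw [hTdef, mul_add, add_mul, ← mul_assoc, ← mul_assoc, KA₁, KA₃, neg_mul, neg_mul, mul_assoc,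
      mul_assoc, (KA₂.add_right KA₄).eq, (KA₂.sub_right KA₄).eq, mul_assoc, mul_assoc]
    abel
  have hKM : Commute K (K * L) := (Commute.refl K).mul_right KL
  have hTM : Commute T (K * L) := by
    have : K * L = 4 - T * T := by rw [hTT]; abel
    rw [this]
    exact (Commute.ofNat_right T 4).sub_right ((Commute.refl T).mul_right (Commute.refl T))
  set M := K * L with hMdef
  have hMtr : M.trace = 0 := by
    have h : (A₁ * M * A₁).trace = M.trace := by
      rw [Matrix.trace_mul_comm, ← mul_assoc, h₁, one_mul]
    have h' : A₁ * M * A₁ = -M := by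
      rw [hMdef, mul_assoc, mul_assoc, LA₁.eq, ← mul_assoc K, KA₁, neg_mul, mul_neg, mul_assoc,
        ← mul_assoc, h₁, one_mul]
    rw [h', Matrix.trace_neg] at h
    linear_combination (-1 / 2 : ℂ) * h
  -- anything that anticommutes with the invertible matrix `K` is traceless
  have trK : ∀ X : Matrix (Fin 4) (Fin 4) ℂ, K * X = -(X * K) → X.trace = 0 := by
    intro X hX
    have h : (K * X * K).trace = k * X.trace := by
      rw [Matrix.trace_mul_comm, ← mul_assoc, hKK, smul_mul_assoc, one_mul, Matrix.trace_smul,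
        smul_eq_mul]
    have h' : (K * X * K).trace = -(k * X.trace) := by
      rw [hX, neg_mul, mul_assoc, hKK, mul_smul_comm, mul_one, Matrix.trace_neg, Matrix.trace_smul,
        smul_eq_mul]
    have : k * X.trace = 0 := by linear_combination (h' - h) / 2
    exact (mul_eq_zero.1 this).resolve_left hk
  have hmC : (m : ℂ) ≠ 0 := by exact_mod_cast hm.ne'
  -- the two spectral projections of `M`, treated together through a sign `ε`
  let P : ℝ → Matrix (Fin 4) (Fin 4) ℂ := fun ε =>
    ((1 / 2 : ℝ) : ℂ) • 1 - ((ε / (2 * m) : ℝ) : ℂ) • M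
  have hPH : ∀ ε, (P ε).IsHermitian := fun ε => by
    simp [P, Matrix.IsHermitian, hMH.eq]
  have hMP : ∀ ε, ε ^ 2 = 1 → M * P ε = ((-(ε * m) : ℝ) : ℂ) • P ε := fun ε hε => by
    have hεC : (ε : ℂ) ^ 2 = 1 := by exact_mod_cast hε
    simp only [P, mul_sub, mul_smul_comm, hMM, mul_one, smul_sub, smul_smul]
    rw [sub_eq_add_neg, sub_eq_add_neg, add_comm, ← neg_smul, ← neg_smul]
    congr 2
    · push_cast; field_simp
    · push_cast; field_simp; linear_combination -hεC
  have hPP : ∀ ε, ε ^ 2 = 1 → P ε * P ε = P ε := fun ε hε => by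
    have hεC : (ε : ℂ) ^ 2 = 1 := by exact_mod_cast hε
    have : P ε * P ε = ((1 / 2 : ℝ) : ℂ) • P ε - ((ε / (2 * m) : ℝ) : ℂ) • (M * P ε) := by
      conv_lhs => enter [1]; simp only [P]
      rw [sub_mul, smul_mul_assoc, one_mul, smul_mul_assoc]
    rw [this, hMP ε hε, smul_smul, ← sub_smul]
    convert one_smul ℂ (P ε) using 2
    push_cast; field_simp; linear_combination hεC
  have hTP : ∀ ε, Commute T (P ε) := fun ε =>
    ((Commute.one_right T).smul_right _).sub_right (hTM.smul_right _)
  have hKP : ∀ ε, Commute K (P ε) := fun ε =>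
    ((Commute.one_right K).smul_right _).sub_right (hKM.smul_right _)
  have hTPH : ∀ ε, (T * P ε).IsHermitian := fun ε => by
    rw [Matrix.IsHermitian, conjTranspose_mul, hTH.eq, (hPH ε).eq, (hTP ε).eq]
  have hTPP : ∀ ε, ε ^ 2 = 1 → T * P ε * P ε = T * P ε := fun ε hε => by
    rw [mul_assoc, hPP ε hε]
  have hTP2 : ∀ ε, ε ^ 2 = 1 → (T * P ε) * (T * P ε) = ((4 + ε * m : ℝ) : ℂ) • P ε := fun ε hε => by
    rw [mul_assoc, ← mul_assoc (P ε), ← (hTP ε).eq, mul_assoc, hPP ε hε, ← mul_assoc, hTT, sub_mul,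
      hMP ε hε]
    push_cast
    rw [neg_smul, sub_neg_eq_add, add_smul]
    congr 1
    ext i j
    simp [Matrix.mul_apply, Matrix.ofNat_apply]
  have htr : ∀ ε, (T * P ε).trace = 0 := fun ε => trK _ (by
    rw [← mul_assoc, hKT, neg_mul, mul_assoc, mul_assoc, (hKP ε).eq])
  have hPtr : ∀ ε, ∑ j, (P ε j j).re = 2 := fun ε => by
    have h : (P ε).trace = 2 := by
      simp only [P, Matrix.trace_sub, Matrix.trace_smul, hMtr, Matrix.trace_one]
      simp; norm_num
    have := congrArg Complex.re h
    simpa [Matrix.trace, Complex.re_sum] using this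
  have htr' : ∀ ε, ∑ j, ((T * P ε) j j).re = 0 := fun ε => by
    have := congrArg Complex.re (htr ε)
    simpa only [Matrix.trace, Matrix.diag_apply, Complex.re_sum, Complex.zero_re] using this
  have hsum : P 1 + P (-1) = 1 := by
    simp only [P, neg_div, Complex.ofReal_neg, neg_smul]
    rw [sub_neg_eq_add, sub_add_add_cancel, ← add_smul]
    convert one_smul ℂ (1 : Matrix (Fin 4) (Fin 4) ℂ) using 2
    push_cast; norm_num
  have s1 : (1 : ℝ) ^ 2 = 1 := by norm_num
  have s2 : (-1 : ℝ) ^ 2 = 1 := by norm_num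
  have hm4 : m ≤ 4 := by
    -- the trace of the positive matrix `(T * P (-1)) * (T * P (-1))ᴴ` is `2 * (4 - m)`
    have hpos := (Matrix.posSemidef_self_mul_conjTranspose (T * P (-1))).trace_nonneg
    rw [(hTPH _).eq, hTP2 _ s2, Matrix.trace_smul] at hpos
    have h := (Complex.le_def.1 hpos).1
    rw [smul_eq_mul, Complex.re_ofReal_mul, Matrix.trace, Complex.re_sum] at h
    simp only [Matrix.diag_apply, hPtr, Complex.zero_re] at h
    linarith
  set a := Real.sqrt (4 + m) with ha
  set b := Real.sqrt (4 - m) with hb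
  have ha2 : a ^ 2 = 4 + m := Real.sq_sqrt (by linarith)
  have hb2 : b ^ 2 = 4 - m := Real.sq_sqrt (by linarith)
  have ha0 : 0 < a := Real.sqrt_pos.2 (by linarith)
  have hb0 : 0 ≤ b := Real.sqrt_nonneg _
  have hba : b ≤ a := Real.sqrt_le_sqrt (by linarith)
  have b₁ := diag_bound (hTPH 1) (hPH 1) (hTPP 1 s1) (hPP 1 s1) ha0.le
    (by rw [hTP2 1 s1, ha2, one_mul])
  have b₂ := diag_bound (hTPH (-1)) (hPH (-1)) (hTPP (-1) s2) (hPP (-1) s2) hb0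
    (by rw [hTP2 (-1) s2, hb2, neg_one_mul, ← sub_eq_add_neg])
  have hx : ∀ j, (P (-1) j j).re = 1 - (P 1 j j).re := fun j => by
    have := congrArg Complex.re (congrFun (congrFun hsum j) j)
    simp only [Matrix.add_apply, Complex.add_re, Matrix.one_apply_eq, Complex.one_re] at this
    linarith
  have hTs : ∀ j, (T j j).re = ((T * P 1) j j).re + ((T * P (-1)) j j).re := fun j => by
    rw [← Complex.add_re, ← Matrix.add_apply, ← mul_add, hsum, mul_one]
  have main := diag_sum_bound hp ha0 hb0 hba (hPtr 1) (fun j => (b₁ j).2) (htr' 1)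
    (fun j => hx j ▸ (b₂ j).2) (htr' (-1))
  simp only [hTs]
  refine (div_le_div_of_nonneg_right main (by norm_num)).trans (Real.le_sqrt_of_sq_le ?_)
  -- Cauchy-Schwarz, with `a ^ 2 + b ^ 2 = 8`
  nlinarith [sq_nonneg (a * (p 1 - p 2) - b * (p 0 - p 3))]

/-! ### Attainment -/

/-- The matrices `Z₁, Z₂, X₁, X₂` are the Pauli operators of two qubits in the Bell basis
`Φ⁺, Φ⁻, Ψ⁺, Ψ⁻`, where `Z₁Z₂ = diag(1, 1, -1, -1)` and `X₁X₂ = diag(1, -1, 1, -1)`. -/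
theorem chsh_diagonal_attained (p : Fin 4 → ℝ) (c s : ℝ) (hcs : c ^ 2 + s ^ 2 = 1) :
    c * ((p 0 - p 3) + (p 1 - p 2)) + s * ((p 0 - p 3) - (p 1 - p 2)) ∈
      chshValues (diagonal (fun i => (p i : ℂ))) := by
  let Z₁ : Matrix (Fin 4) (Fin 4) ℂ := !![0, 1, 0, 0; 1, 0, 0, 0; 0, 0, 0, 1; 0, 0, 1, 0]
  let Z₂ : Matrix (Fin 4) (Fin 4) ℂ := !![0, 1, 0, 0; 1, 0, 0, 0; 0, 0, 0, -1; 0, 0, -1, 0]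
  let X₁ : Matrix (Fin 4) (Fin 4) ℂ := !![0, 0, 1, 0; 0, 0, 0, -1; 1, 0, 0, 0; 0, -1, 0, 0]
  let X₂ : Matrix (Fin 4) (Fin 4) ℂ := !![0, 0, 1, 0; 0, 0, 0, 1; 1, 0, 0, 0; 0, 1, 0, 0]
  have hcsC : (c : ℂ) ^ 2 + (s : ℂ) ^ 2 = 1 := by exact_mod_cast hcs
  have hZ₁ : Z₁.IsHermitian := by ext i j; fin_cases i <;> fin_cases j <;> simp [Z₁]
  have hZ₂ : Z₂.IsHermitian := by ext i j; fin_cases i <;> fin_cases j <;> simp [Z₂]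
  have hX₁ : X₁.IsHermitian := by ext i j; fin_cases i <;> fin_cases j <;> simp [X₁]
  have hX₂ : X₂.IsHermitian := by ext i j; fin_cases i <;> fin_cases j <;> simp [X₂]
  have one4 : (1 : Matrix (Fin 4) (Fin 4) ℂ) =
      !![1, 0, 0, 0; 0, 1, 0, 0; 0, 0, 1, 0; 0, 0, 0, 1] := by
    ext i j; fin_cases i <;> fin_cases j <;> simp
  have zz₁ : Z₁ * Z₁ = 1 := by rw [one4]; simp [Z₁]
  have zz₂ : Z₂ * Z₂ = 1 := by rw [one4]; simp [Z₂]
  have xx₁ : X₁ * X₁ = 1 := by rw [one4]; simp [X₁]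
  have xx₂ : X₂ * X₂ = 1 := by rw [one4]; simp [X₂]
  have zx₂ : X₂ * Z₂ = -(Z₂ * X₂) := by simp [Z₂, X₂]
  have c₁ : Commute Z₁ Z₂ := by simp [Commute, SemiconjBy, Z₁, Z₂]
  have c₂ : Commute Z₁ X₂ := by simp [Commute, SemiconjBy, Z₁, X₂]
  have c₃ : Commute X₁ Z₂ := by simp [Commute, SemiconjBy, X₁, Z₂]
  have c₄ : Commute X₁ X₂ := by simp [Commute, SemiconjBy, X₁, X₂]
  have inv : ∀ s : ℂ, (c : ℂ) ^ 2 + s ^ 2 = 1 →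
      ((c : ℂ) • Z₂ + s • X₂) * ((c : ℂ) • Z₂ + s • X₂) = 1 := by
    intro s h
    simp only [mul_add, add_mul, smul_mul_assoc, mul_smul_comm, zz₂, xx₂, zx₂, smul_neg]
    calc _ = ((c : ℂ) ^ 2 + s ^ 2) • (1 : Matrix (Fin 4) (Fin 4) ℂ) := by module
      _ = 1 := by rw [h, one_smul]
  have herm : ∀ s : ℝ, ((c : ℂ) • Z₂ + (s : ℂ) • X₂).IsHermitian := by
    intro s
    simp [Matrix.IsHermitian, hZ₂.eq, hX₂.eq]
  refine ⟨Z₁, (c : ℂ) • Z₂ + (s : ℂ) • X₂, X₁, (c : ℂ) • Z₂ + ((-s : ℝ) : ℂ) • X₂,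
    hZ₁, herm s, hX₁, herm (-s), zz₁, inv s hcsC, xx₁, inv _ (by push_cast; rw [neg_sq, hcsC]),
    (c₁.smul_right _).add_right (c₂.smul_right _),
    ((c₃.smul_right _).add_right (c₄.smul_right _)).symm,
    (c₃.smul_right _).add_right (c₄.smul_right _),
    ((c₁.smul_right _).add_right (c₂.smul_right _)).symm, ?_⟩
  rw [trace_diagonal_mul_re, Fin.sum_univ_four]
  simp [Z₁, Z₂, X₁, X₂]
  ring

/-! ### Ordered eigenvalues and unitary conjugation -/

theorem eigDesc_eq_eigenvalues_comp {d : ℕ} {ρ : Matrix (Fin d) (Fin d) ℂ} (h : ρ.IsHermitian) :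
    Antitone (eigDesc h) ∧ ∃ σ : Equiv.Perm (Fin d), eigDesc h = h.eigenvalues ∘ σ := by
  set f := h.eigenvalues with hf
  have mono : Monotone (f ∘ Tuple.sort f) := Tuple.monotone_sort f
  have hsort : (eigMultiset h).sort (· ≤ ·) = List.ofFn (f ∘ Tuple.sort f) := by
    refine List.Perm.eq_of_pairwise' (r := (· ≤ ·)) (Multiset.pairwise_sort _ _) ?_ ?_
    · exact List.pairwise_ofFn.2 fun i j hij => mono hij.le
    · rw [← Multiset.coe_eq_coe, Multiset.sort_eq]
      refine Eq.trans ?_ (Multiset.coe_eq_coe.2 (Equiv.Perm.ofFn_comp_perm (Tuple.sort f) f).symm)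
      rw [eigMultiset, ← hf, Fin.univ_val_map]
  have key : eigDesc h = f ∘ (Fin.revPerm.trans (Tuple.sort f)) := by
    funext i
    have hi : (i : ℕ) < (List.ofFn (f ∘ Tuple.sort f)).reverse.length := by simp
    rw [eigDesc, eigListDesc, hsort, List.getD_eq_getElem _ _ hi, List.getElem_reverse,
      List.getElem_ofFn]
    simp only [Function.comp_apply, Equiv.trans_apply, Fin.revPerm_apply]
    congr 2
    ext
    simp [Fin.val_rev]
    lia
  refine ⟨?_, _, key⟩
  rw [key]
  intro i j hij
  exact mono (Fin.rev_le_rev.2 hij)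

theorem exists_unitary_diagonal_eigDesc {d : ℕ} {ρ : Matrix (Fin d) (Fin d) ℂ}
    (h : ρ.IsHermitian) : ∃ U : Matrix (Fin d) (Fin d) ℂ, Uᴴ * U = 1 ∧ U * Uᴴ = 1 ∧
      ρ = U * diagonal (fun i => (eigDesc h i : ℂ)) * Uᴴ := by
  obtain ⟨-, σ, hσ⟩ := eigDesc_eq_eigenvalues_comp h
  set V : Matrix (Fin d) (Fin d) ℂ := ↑h.eigenvectorUnitary with hV
  have hV1 : Vᴴ * V = 1 := Unitary.coe_star_mul_self h.eigenvectorUnitary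
  have hV2 : V * Vᴴ = 1 := Unitary.coe_mul_star_self h.eigenvectorUnitary
  have hD : diagonal (fun i => (eigDesc h i : ℂ)) =
      (diagonal (fun i => (h.eigenvalues i : ℂ))).submatrix σ σ := by
    rw [Matrix.submatrix_diagonal_equiv, hσ]; rfl
  refine ⟨V.submatrix id σ, ?_, ?_, ?_⟩
  · rw [Matrix.conjTranspose_submatrix, Matrix.submatrix_mul _ _ σ id σ Function.bijective_id |>.symm,
      hV1, Matrix.submatrix_one_equiv]
  · rw [Matrix.conjTranspose_submatrix, Matrix.submatrix_mul_equiv, hV2, Matrix.submatrix_id_id]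
  · rw [Matrix.conjTranspose_submatrix, hD, Matrix.submatrix_mul_equiv, Matrix.submatrix_mul_equiv,
      Matrix.submatrix_id_id]
    have := h.spectral_theorem
    rw [Unitary.conjStarAlgAut_apply] at this
    exact this

/-- The values `tr(ρ T) / 2` are transported along a unitary conjugation of the state, by
conjugating the four observables as well. -/
theorem conj_mem_chshValues {ρ D U : Matrix (Fin 4) (Fin 4) ℂ} (hU : Uᴴ * U = 1) (hU' : U * Uᴴ = 1)
    (hρ : ρ = U * D * Uᴴ) {r : ℝ} (hr : r ∈ chshValues D) : r ∈ chshValues ρ := by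
  obtain ⟨A₁, A₂, A₃, A₄, H₁, H₂, H₃, H₄, h₁, h₂, h₃, h₄, c₁, c₂, c₃, c₄, rfl⟩ := hr
  have hmul : ∀ X Y : Matrix (Fin 4) (Fin 4) ℂ,
      (U * X * Uᴴ) * (U * Y * Uᴴ) = U * (X * Y) * Uᴴ := fun X Y => by
    simp only [mul_assoc]; rw [← mul_assoc Uᴴ U, hU, one_mul]
  have hsq : ∀ {X : Matrix (Fin 4) (Fin 4) ℂ}, X * X = 1 → (U * X * Uᴴ) * (U * X * Uᴴ) = 1 :=
    fun hX => by rw [hmul, hX, mul_one, hU']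
  have com : ∀ {X Y : Matrix (Fin 4) (Fin 4) ℂ}, Commute X Y →
      Commute (U * X * Uᴴ) (U * Y * Uᴴ) := fun {X Y} h => by
    rw [Commute, SemiconjBy, hmul, hmul, h.eq]
  have hadd : ∀ X Y : Matrix (Fin 4) (Fin 4) ℂ,
      U * X * Uᴴ + U * Y * Uᴴ = U * (X + Y) * Uᴴ := fun X Y => by rw [mul_add, add_mul]
  have hsub : ∀ X Y : Matrix (Fin 4) (Fin 4) ℂ,
      U * X * Uᴴ - U * Y * Uᴴ = U * (X - Y) * Uᴴ := fun X Y => by rw [mul_sub, sub_mul]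
  refine ⟨U * A₁ * Uᴴ, U * A₂ * Uᴴ, U * A₃ * Uᴴ, U * A₄ * Uᴴ,
    isHermitian_mul_mul_conjTranspose U H₁, isHermitian_mul_mul_conjTranspose U H₂,
    isHermitian_mul_mul_conjTranspose U H₃, isHermitian_mul_mul_conjTranspose U H₄,
    hsq h₁, hsq h₂, hsq h₃, hsq h₄, com c₁, com c₂, com c₃, com c₄, ?_⟩
  rw [hρ, hadd, hsub, hmul, hmul, hadd, hmul, Matrix.trace_mul_comm _ Uᴴ, ← mul_assoc Uᴴ U, hU,
    one_mul]

theorem eigDesc_nonneg {ρ : Matrix (Fin 4) (Fin 4) ℂ} (h : ρ.PosSemidef) (i : Fin 4) :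
    0 ≤ eigDesc h.1 i := by
  obtain ⟨-, σ, hσ⟩ := eigDesc_eq_eigenvalues_comp h.1
  rw [hσ]
  exact h.eigenvalues_nonneg _

theorem sum_eigDesc {ρ : Matrix (Fin 4) (Fin 4) ℂ} (h : IsDensityMatrix ρ) :
    ∑ i, eigDesc h.1.1 i = 1 := by
  obtain ⟨-, σ, hσ⟩ := eigDesc_eq_eigenvalues_comp h.1.1
  have ht := h.1.1.trace_eq_sum_eigenvalues.symm.trans h.2
  rw [hσ]
  simp only [Function.comp_apply]
  rw [Equiv.sum_comp σ h.1.1.eigenvalues]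
  have ht' : ((∑ i, h.1.1.eigenvalues i : ℝ) : ℂ) = (1 : ℝ) := by
    rw [Complex.ofReal_sum, Complex.ofReal_one]; exact ht
  exact Complex.ofReal_injective ht'

/-! ### The value of `C4` -/

theorem C4_eq {ρA : Matrix (Fin 4) (Fin 4) ℂ} (hρA : IsDensityMatrix ρA) :
    C4 ρA = max 1 (Real.sqrt (2 * ((eigDesc hρA.1.1 0 - eigDesc hρA.1.1 3) ^ 2 +
      (eigDesc hρA.1.1 1 - eigDesc hρA.1.1 2) ^ 2))) := by
  obtain ⟨U, hU, hU', hρ⟩ := exists_unitary_diagonal_eigDesc hρA.1.1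
  have hp := (eigDesc_eq_eigenvalues_comp hρA.1.1).1
  have hp0 := eigDesc_nonneg hρA.1
  have hp1 := sum_eigDesc hρA
  generalize eigDesc hρA.1.1 = p at *
  rw [C4_eq_sSup]
  refine IsGreatest.csSup_eq ⟨?_, ?_⟩
  · rcases max_choice 1 (Real.sqrt (2 * ((p 0 - p 3) ^ 2 + (p 1 - p 2) ^ 2))) with h | h <;> rw [h]
    · refine ⟨1, 1, 1, 1, isHermitian_one, isHermitian_one, isHermitian_one, isHermitian_one,
        mul_one _, mul_one _, mul_one _, mul_one _, Commute.refl _, Commute.refl _,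
        Commute.refl _, Commute.refl _, ?_⟩
      rw [sub_self, mul_zero, add_zero, one_mul, mul_add, mul_one, Matrix.trace_add, hρA.2]
      norm_num
    · set N := Real.sqrt (2 * ((p 0 - p 3) ^ 2 + (p 1 - p 2) ^ 2)) with hN
      have hN2 : N ^ 2 = 2 * ((p 0 - p 3) ^ 2 + (p 1 - p 2) ^ 2) := Real.sq_sqrt (by positivity)
      have hN0 : N ≠ 0 := by
        have := le_max_left 1 N
        rw [h] at this
        linarith
      -- equality in the Cauchy-Schwarz inequality forces this choice of the unit vector `(c, s)`
      have hatt := chsh_diagonal_attained p (((p 0 - p 3) + (p 1 - p 2)) / N)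
        (((p 0 - p 3) - (p 1 - p 2)) / N) (by field_simp; rw [hN2]; ring)
      refine conj_mem_chshValues hU hU' hρ ?_
      convert hatt using 1
      field_simp
      rw [hN2]; ring
  · intro r hr
    have hD : diagonal (fun i => (p i : ℂ)) = Uᴴ * ρA * Uᴴᴴ := by
      rw [hρ, conjTranspose_conjTranspose]
      simp only [mul_assoc]
      rw [hU, mul_one, ← mul_assoc, hU, one_mul]
    obtain ⟨A₁, A₂, A₃, A₄, H₁, H₂, H₃, H₄, h₁, h₂, h₃, h₄, c₁, c₂, c₃, c₄, rfl⟩ :=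
      conj_mem_chshValues (U := Uᴴ) (by rw [conjTranspose_conjTranspose, hU'])
        (by rw [conjTranspose_conjTranspose, hU]) hD hr
    exact chsh_diagonal_le hp hp0 hp1 H₁ H₂ H₃ H₄ h₁ h₂ h₃ h₄ c₁ c₂ c₃ c₄

theorem eigDesc_pure {ρ : Matrix (Fin 4) (Fin 4) ℂ} (h : IsDensityMatrix ρ) (hψ : IsPureState ρ) :
    eigDesc h.1.1 0 = 1 ∧ eigDesc h.1.1 1 = 0 ∧ eigDesc h.1.1 2 = 0 ∧ eigDesc h.1.1 3 = 0 := by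
  obtain ⟨U, hU, -, hρ⟩ := exists_unitary_diagonal_eigDesc h.1.1
  have hp := (eigDesc_eq_eigenvalues_comp h.1.1).1
  have hp0 := eigDesc_nonneg h.1
  have hp1 := sum_eigDesc h
  have hsq : ρ * ρ = ρ := by
    obtain ⟨ψ, hn, rfl⟩ := hψ
    rw [pureState, Matrix.vecMulVec_mul_vecMulVec, hn, one_smul]
  generalize eigDesc h.1.1 = p at *
  have hD : diagonal (fun i => (p i : ℂ)) = Uᴴ * ρ * U := by
    rw [hρ]
    simp only [mul_assoc]
    rw [hU, mul_one, ← mul_assoc, hU, one_mul]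
  have hDD : diagonal (fun i => (p i : ℂ)) * diagonal (fun i => (p i : ℂ)) =
      diagonal (fun i => (p i : ℂ)) := by
    have : ρ * U * diagonal (fun i => (p i : ℂ)) = ρ * U := by
      have e : ρ * U = U * diagonal (fun i => (p i : ℂ)) := by
        conv_lhs => rw [hρ]
        rw [mul_assoc, hU, mul_one]
      rw [e, ← e, hsq.symm, mul_assoc, mul_assoc, ← e]
      simp only [← mul_assoc, hsq]
    nth_rewrite 1 [hD]
    rw [mul_assoc, mul_assoc, ← mul_assoc ρ, this, hD, mul_assoc]
  have hpp : ∀ i, p i = 0 ∨ p i = 1 := fun i => by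
    have e := congrFun (congrFun hDD i) i
    rw [Matrix.diagonal_mul_diagonal, Matrix.diagonal_apply_eq, Matrix.diagonal_apply_eq] at e
    have e' : p i * p i = p i := by exact_mod_cast e
    have : p i * (p i - 1) = 0 := by linear_combination e'
    exact (mul_eq_zero.1 this).imp id sub_eq_zero.1
  rw [Fin.sum_univ_four] at hp1
  have p01 : p 1 ≤ p 0 := hp (by decide)
  have p12 : p 2 ≤ p 1 := hp (by decide)
  have p23 : p 3 ≤ p 2 := hp (by decide)
  have := hp0 3
  have h0 : p 0 = 1 := (hpp 0).resolve_left fun h => by linarith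
  refine ⟨h0, ?_, ?_, ?_⟩ <;> linarith

/-- For a state of a 4-level system with decreasing eigenvalues
`p₁ ≥ p₂ ≥ p₃ ≥ p₄`, `C₄(ρ_A) = max{1, √(2[(p₁−p₄)² + (p₂−p₃)²])}`; in particular
`C₄` equals `√2` on pure states. -/
theorem statement_17 (ρA : Matrix (Fin 4) (Fin 4) ℂ) (hρA : IsDensityMatrix ρA) :
    C4 ρA = max 1 (Real.sqrt (2 * ((eigDesc hρA.1.1 0 - eigDesc hρA.1.1 3) ^ 2 +
      (eigDesc hρA.1.1 1 - eigDesc hρA.1.1 2) ^ 2))) ∧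
    (IsPureState ρA → C4 ρA = Real.sqrt 2) := by
  refine ⟨C4_eq hρA, fun hψ => ?_⟩
  obtain ⟨e₀, e₁, e₂, e₃⟩ := eigDesc_pure hρA hψ
  rw [C4_eq hρA, e₀, e₁, e₂, e₃]
  norm_num

end
end

section
/- For y ∈ [1,4], the infimum of √2 − √(2[(p_1−p_4)² + (p_2−p_3)²]) over probability vectors p = (p_1,p_2,p_3,p_4) with p_1 ≥ p_2 ≥ p_3 ≥ p_4 ≥ 0, Σ_i p_i = 1, and (Σ_i √p_i)² = y, equals f(y) = √2 − (3√y + √(32−7y))^{3/2} (√(32−7y) − √y)^{1/2} / 32. Equivalently, the supremum of √(2[(p_1−p_4)² + (p_2−p_3)²]) under these constraints equals (3√y + √(32−7y))^{3/2} (√(32−7y) − √y)^{1/2} / 32. -/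
/-!
Write `a ≥ b ≥ c ≥ d ≥ 0` for the square roots of the `pᵢ`, `s = √y`, and pass to
`U = a + d`, `v = a - d`, `w = b + c`, `x = b - c`. The constraints become `U + w = s` and
`U² + v² + w² + x² = 2`, and `chshVal p ^ 2 = 2 (U² v² + w² x²)`. Replacing both
`U²` and `w²` by the larger one, this is at most `2 h(t)` with `t = max U w` and
`h(t) = t² (2 - t² - (s - t)²)`. The larger critical point
`u = (3s + √(32 - 7s²)) / 8` of the quartic `h` satisfies
`h(u) - h(t) = (t - u)² (2t² + 2(2u - s)t + u(2u - s)) ≥ 0` for `t ≥ 0`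
(`quartic_le`), where `h(u) = u³ (2u - s)`; this gives the upper bound (`chshVal_le`).
Equality holds at `x = 0`, `U = u`, `v = √(u (2u - s))`, that is, for a spectrum with two equal
middle entries; the ordering and positivity of that spectrum come down to `s/2 ≤ u ≤ s`, and
`u ≤ s` is where `y ≥ 1` is needed (`chshVal_attained`).
-/

noncomputable section

/-- The maximal CHSH value attainable with spectrum `p`:
`C'₄(p) = √(2[(p₁−p₄)² + (p₂−p₃)²])`. -/
def chshVal (p : Fin 4 → ℝ) : ℝ :=
  Real.sqrt (2 * ((p 0 - p 3) ^ 2 + (p 1 - p 2) ^ 2))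

/-- The optimal value `(3√y + √(32−7y))^{3/2} (√(32−7y) − √y)^{1/2} / 32`. -/
def chshOpt (y : ℝ) : ℝ :=
  (3 * Real.sqrt y + Real.sqrt (32 - 7 * y)) ^ ((3 : ℝ) / 2) *
    Real.sqrt (Real.sqrt (32 - 7 * y) - Real.sqrt y) / 32

/-- The optimal value of `√p₁ + √p₄`: the larger critical point of
`t ↦ t² (2 - t² - (√y - t)²)`. -/
def optSum (y : ℝ) : ℝ := (3 * Real.sqrt y + Real.sqrt (32 - 7 * y)) / 8

/-- The critical-point equation for `optSum y`, together with its location relative to `√y`. -/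
lemma optSum_spec {y : ℝ} (hy : y ∈ Set.Icc (1 : ℝ) 4) :
    4 * optSum y ^ 2 - 3 * Real.sqrt y * optSum y = 2 - Real.sqrt y ^ 2 ∧
      Real.sqrt y ≤ 2 * optSum y ∧ optSum y ≤ Real.sqrt y := by
  obtain ⟨h1, h4⟩ := hy
  have hs : Real.sqrt y ^ 2 = y := Real.sq_sqrt (by linarith)
  have hr : Real.sqrt (32 - 7 * y) ^ 2 = 32 - 7 * y := Real.sq_sqrt (by linarith)
  have hs0 := Real.sqrt_nonneg y
  have hr0 := Real.sqrt_nonneg (32 - 7 * y)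
  have hsr : Real.sqrt y ≤ Real.sqrt (32 - 7 * y) := Real.sqrt_le_sqrt (by linarith)
  have hrs : Real.sqrt (32 - 7 * y) ≤ 5 * Real.sqrt y :=
    abs_le_of_sq_le_sq' (by nlinarith) (by positivity) |>.2
  unfold optSum
  refine ⟨?_, by linarith, by linarith⟩
  linear_combination hr / 16 + 7 / 16 * hs

lemma chshOpt_eq {y : ℝ} (hy : y ∈ Set.Icc (1 : ℝ) 4) :
    chshOpt y = Real.sqrt (2 * (optSum y ^ 3 * (2 * optSum y - Real.sqrt y))) := by
  obtain ⟨-, h2, -⟩ := optSum_spec hy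
  have hs0 : 0 < Real.sqrt y := Real.sqrt_pos.2 (by linarith [hy.1])
  have hu : 0 < optSum y := by linarith
  have e1 : 3 * Real.sqrt y + Real.sqrt (32 - 7 * y) = 8 * optSum y := by
    unfold optSum; ring
  have e2 : Real.sqrt (32 - 7 * y) - Real.sqrt y = 4 * (2 * optSum y - Real.sqrt y) := by
    unfold optSum; ring
  have e3 : (8 * optSum y) ^ ((3 : ℝ) / 2) = 8 * optSum y * Real.sqrt (8 * optSum y) := by
    rw [show (3 : ℝ) / 2 = 1 + 1 / 2 by norm_num, Real.rpow_add (by positivity), Real.rpow_one,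
      Real.sqrt_eq_rpow]
  unfold chshOpt
  rw [e1, e2, e3]
  refine (Real.sqrt_eq_iff_mul_self_eq ?_ ?_).2 ?_ |>.symm
  · have : 0 ≤ 2 * optSum y - Real.sqrt y := by linarith
    positivity
  · positivity
  · have q1 : Real.sqrt (8 * optSum y) ^ 2 = 8 * optSum y := Real.sq_sqrt (by positivity)
    have q2 : Real.sqrt (4 * (2 * optSum y - Real.sqrt y)) ^ 2
        = 4 * (2 * optSum y - Real.sqrt y) := Real.sq_sqrt (by linarith)
    symm
    calc _ = (8 * optSum y) ^ 2 * Real.sqrt (8 * optSum y) ^ 2 *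
          Real.sqrt (4 * (2 * optSum y - Real.sqrt y)) ^ 2 / 32 ^ 2 := by ring
      _ = _ := by rw [q1, q2]; ring

/-- The quartic `t² (2 - t² - (s - t)²)` is maximised over `t ≥ 0` at its larger critical
point `u`. -/
lemma quartic_le {s u t : ℝ} (hcrit : 4 * u ^ 2 - 3 * s * u = 2 - s ^ 2) (hu : 0 ≤ u)
    (hsu : s ≤ 2 * u) (ht : 0 ≤ t) :
    t ^ 2 * (2 - t ^ 2 - (s - t) ^ 2) ≤ u ^ 3 * (2 * u - s) := by
  have h0 : 0 ≤ 2 * u - s := by linarith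
  have key : 0 ≤ (t - u) ^ 2 * (2 * t ^ 2 + 2 * (2 * u - s) * t + u * (2 * u - s)) := by
    positivity
  linear_combination key - t ^ 2 * hcrit

lemma chshVal_le {y : ℝ} (hy : y ∈ Set.Icc (1 : ℝ) 4) {p : Fin 4 → ℝ}
    (hp : p 0 ≥ p 1 ∧ p 1 ≥ p 2 ∧ p 2 ≥ p 3 ∧ p 3 ≥ 0) (hsum : ∑ i, p i = 1)
    (hsq : (∑ i, Real.sqrt (p i)) ^ 2 = y) : chshVal p ≤ chshOpt y := by
  obtain ⟨hcrit, hsu, -⟩ := optSum_spec hy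
  obtain ⟨h01, h12, h23, h3⟩ := hp
  rw [chshOpt_eq hy]
  unfold chshVal
  apply Real.sqrt_le_sqrt
  have hs : Real.sqrt y = ∑ i, Real.sqrt (p i) := by
    rw [← hsq, Real.sqrt_sq (Finset.sum_nonneg fun i _ => Real.sqrt_nonneg _)]
  have hu : 0 ≤ optSum y := by linarith [Real.sqrt_nonneg y]
  generalize optSum y = u at *
  generalize Real.sqrt y = s at *
  simp only [Fin.sum_univ_four] at hsum hs
  have ha := Real.sq_sqrt (show 0 ≤ p 0 by linarith)
  have hb := Real.sq_sqrt (show 0 ≤ p 1 by linarith)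
  have hc := Real.sq_sqrt (show 0 ≤ p 2 by linarith)
  have hd := Real.sq_sqrt h3
  have hab := Real.sqrt_le_sqrt h01
  have hbc := Real.sqrt_le_sqrt h12
  have hcd := Real.sqrt_le_sqrt h23
  have hd0 := Real.sqrt_nonneg (p 3)
  rw [← ha, ← hb, ← hc, ← hd] at hsum ⊢
  generalize √(p 0) = a at *
  generalize √(p 1) = b at *
  generalize √(p 2) = c at *
  generalize √(p 3) = d at *
  rcases le_total (b + c) (a + d) with h | h
  · have hq := quartic_le hcrit hu hsu (t := a + d) (by linarith)
    -- The coefficient `w²` of `x²` is replaced by the larger `U²`.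
    have hm : 0 ≤ (b - c) ^ 2 * ((a + d) ^ 2 - (b + c) ^ 2) :=
      mul_nonneg (sq_nonneg _) (sub_nonneg.2 (pow_le_pow_left₀ (by linarith) h 2))
    have e : 2 - (a + d) ^ 2 - (s - (a + d)) ^ 2 = (a - d) ^ 2 + (b - c) ^ 2 := by
      rw [hs]; linear_combination (-2) * hsum
    rw [e] at hq
    linear_combination 2 * hq + 2 * hm
  · have hq := quartic_le hcrit hu hsu (t := b + c) (by linarith)
    -- The coefficient `U²` of `v²` is replaced by the larger `w²`.
    have hm : 0 ≤ (a - d) ^ 2 * ((b + c) ^ 2 - (a + d) ^ 2) :=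
      mul_nonneg (sq_nonneg _) (sub_nonneg.2 (pow_le_pow_left₀ (by linarith) h 2))
    have e : 2 - (b + c) ^ 2 - (s - (b + c)) ^ 2 = (a - d) ^ 2 + (b - c) ^ 2 := by
      rw [hs]; linear_combination (-2) * hsum
    rw [e] at hq
    linear_combination 2 * hq + 2 * hm

/-- The spectrum with square roots `(u + v) / 2, (s - u) / 2, (s - u) / 2, (u - v) / 2`, where
`s = √y`, `u = optSum y` and `v = √(u (2u - s))`, attains the bound. -/
lemma chshVal_attained {y : ℝ} (hy : y ∈ Set.Icc (1 : ℝ) 4) :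
    ∃ p : Fin 4 → ℝ, (p 0 ≥ p 1 ∧ p 1 ≥ p 2 ∧ p 2 ≥ p 3 ∧ p 3 ≥ 0) ∧ (∑ i, p i) = 1 ∧
      (∑ i, Real.sqrt (p i)) ^ 2 = y ∧ chshOpt y = chshVal p := by
  obtain ⟨hcrit, hsu, hus⟩ := optSum_spec hy
  have hs2 : Real.sqrt y ^ 2 = y := Real.sq_sqrt (by linarith [hy.1])
  rw [chshOpt_eq hy]
  have hu : 0 ≤ optSum y := by linarith [Real.sqrt_nonneg y]
  generalize optSum y = u at *
  generalize Real.sqrt y = s at *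
  have h0 : 0 ≤ 2 * u - s := by linarith
  obtain ⟨v, hv0, hv⟩ : ∃ v : ℝ, 0 ≤ v ∧ v ^ 2 = u * (2 * u - s) :=
    ⟨_, Real.sqrt_nonneg _, Real.sq_sqrt (mul_nonneg hu h0)⟩
  have hvu : v ≤ u := abs_le_of_sq_le_sq' (by nlinarith) hu |>.2
  have huv : 2 * u - s ≤ v := abs_le_of_sq_le_sq' (by nlinarith) hv0 |>.2
  have ha : 0 ≤ (u + v) / 2 := by linarith
  have hb : 0 ≤ (s - u) / 2 := by linarith
  have hd : 0 ≤ (u - v) / 2 := by linarith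
  refine ⟨![((u + v) / 2) ^ 2, ((s - u) / 2) ^ 2, ((s - u) / 2) ^ 2, ((u - v) / 2) ^ 2],
    ⟨?_, le_rfl, ?_, sq_nonneg _⟩, ?_, ?_, ?_⟩
  · exact pow_le_pow_left₀ hb (by linarith) 2
  · exact pow_le_pow_left₀ hd (by linarith) 2
  · simp [Fin.sum_univ_four]
    linear_combination hv / 2 + hcrit / 2
  · simp [Fin.sum_univ_four, Real.sqrt_sq, ha, hb, hd]
    linear_combination hs2
  · simp [chshVal]
    congr 1
    linear_combination (-u ^ 2) * hv

/-- For `y ∈ [1,4]`, the infimum of `√2 − √(2[(p₁−p₄)²+(p₂−p₃)²])`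
over decreasing probability 4-vectors `p` with `(∑√pᵢ)² = y` equals
`f(y) = √2 − (3√y + √(32−7y))^{3/2}(√(32−7y) − √y)^{1/2}/32`; equivalently the supremum
of `√(2[(p₁−p₄)²+(p₂−p₃)²])` under these constraints equals
`(3√y + √(32−7y))^{3/2}(√(32−7y) − √y)^{1/2}/32`. -/
theorem statement_18 (y : ℝ) (hy : y ∈ Set.Icc (1 : ℝ) 4) :
    sInf { r : ℝ | ∃ p : Fin 4 → ℝ,
      (p 0 ≥ p 1 ∧ p 1 ≥ p 2 ∧ p 2 ≥ p 3 ∧ p 3 ≥ 0) ∧ (∑ i, p i) = 1 ∧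
      (∑ i, Real.sqrt (p i)) ^ 2 = y ∧ r = Real.sqrt 2 - chshVal p } =
      Real.sqrt 2 - chshOpt y ∧
    sSup { r : ℝ | ∃ p : Fin 4 → ℝ,
      (p 0 ≥ p 1 ∧ p 1 ≥ p 2 ∧ p 2 ≥ p 3 ∧ p 3 ≥ 0) ∧ (∑ i, p i) = 1 ∧
      (∑ i, Real.sqrt (p i)) ^ 2 = y ∧ r = chshVal p } = chshOpt y := by
  obtain ⟨p, hp, hsum, hsq, hval⟩ := chshVal_attained hy
  constructor
  · refine IsLeast.csInf_eq ⟨⟨p, hp, hsum, hsq, by rw [hval]⟩, ?_⟩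
    rintro r ⟨q, hq, hqsum, hqsq, rfl⟩
    exact sub_le_sub_left (chshVal_le hy hq hqsum hqsq) _
  · refine IsGreatest.csSup_eq ⟨⟨p, hp, hsum, hsq, hval⟩, ?_⟩
    rintro r ⟨q, hq, hqsum, hqsq, rfl⟩
    exact chshVal_le hy hq hqsum hqsq

end
end

section
/- The function f(y) = √2 − (3√y + √(32−7y))^{3/2} (√(32−7y) − √y)^{1/2} / 32 on [1,4] is convex (hence equal to its own convex hull), nondecreasing, and satisfies f(1) = 0 and f(4) = √2. Moreover, f(2.95) ≥ √2 − 1, so f(y) ≥ √2 − 1 for all y ∈ [2.95, 4]. -/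
/-!
Put `a = √y`, `b = √(32 - 7y)`, `s = 3a + b`, `d = b - a`, so that `f = √2 - s^{3/2} d^{1/2} / 32`.
Since `a' = 1/(2a)` and `b' = -7/(2b)`, the logarithmic derivative of `s^{3/2} d^{1/2}` has numerator
`3(3b - 7a)(b - a) - (7a + b)(3a + b) = 8b(b - 5a)`, which gives on `(1, 4)`
`f'(y) = √(s/d) · (5 - b/a) / 16`  (`hasDerivAt_fCHSH`).
With `t = b/a`, which decreases from `5` to `1` as `y` runs from `1` to `4`, both factors
`√(s/d) = √((t + 3)/(t - 1))` and `5 - t` are nonnegative and decreasing in `t`, hence nondecreasing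
in `y`. So `f'` is nonnegative and nondecreasing, and `f` is nondecreasing and convex.
At `y = 2.95` the bound is `s · √s · √d ≤ 32`, checked from rational upper bounds of the factors.
-/

noncomputable section

/-- `f(y) = √2 − (3√y + √(32−7y))^{3/2} (√(32−7y) − √y)^{1/2} / 32`. -/
def fCHSH (y : ℝ) : ℝ :=
  Real.sqrt 2 -
    (3 * Real.sqrt y + Real.sqrt (32 - 7 * y)) ^ ((3 : ℝ) / 2) *
      Real.sqrt (Real.sqrt (32 - 7 * y) - Real.sqrt y) / 32

/-- The power `3/2` rewritten through square roots; valid for every real `y` as the base is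
nonnegative. -/
theorem fCHSH_eq (y : ℝ) : fCHSH y = √2 -
    (3 * √y + √(32 - 7 * y)) * √(3 * √y + √(32 - 7 * y)) * √(√(32 - 7 * y) - √y) / 32 := by
  have hs : 0 ≤ 3 * √y + √(32 - 7 * y) := by positivity
  have h : (3 * √y + √(32 - 7 * y)) ^ ((3 : ℝ) / 2)
      = (3 * √y + √(32 - 7 * y)) * √(3 * √y + √(32 - 7 * y)) := by
    rw [show (3 : ℝ) / 2 = 1 + 1 / 2 by norm_num,
      Real.rpow_add_of_nonneg hs (by norm_num) (by norm_num), Real.rpow_one, ← Real.sqrt_eq_rpow]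
  rw [fCHSH, h]

theorem sqrt_lt_sqrt_of_mem {y : ℝ} (hy : y ∈ Set.Ioo (1 : ℝ) 4) : √y < √(32 - 7 * y) :=
  Real.sqrt_lt_sqrt (by linarith [hy.1]) (by linarith [hy.2])

theorem sqrt_le_five_mul_sqrt {y : ℝ} (hy : 1 ≤ y) : √(32 - 7 * y) ≤ 5 * √y := by
  rw [Real.sqrt_le_left (by positivity), mul_pow, Real.sq_sqrt (by linarith)]
  linarith

theorem hasDerivAt_fCHSH {y : ℝ} (hy : y ∈ Set.Ioo (1 : ℝ) 4) :
    HasDerivAt fCHSH (√(3 * √y + √(32 - 7 * y)) / √(√(32 - 7 * y) - √y) *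
      (5 - √(32 - 7 * y) / √y) / 16) y := by
  have hab := sqrt_lt_sqrt_of_mem hy
  obtain ⟨h1, h4⟩ := hy
  have ha : 0 < √y := Real.sqrt_pos.2 (by linarith)
  have hb : 0 < √(32 - 7 * y) := ha.trans hab
  have hs : 0 < 3 * √y + √(32 - 7 * y) := by positivity
  have hd : 0 < √(32 - 7 * y) - √y := sub_pos.2 hab
  have Da : HasDerivAt (fun y : ℝ => √y) (1 / (2 * √y)) y :=
    (hasDerivAt_id y).sqrt (by simp only [id]; linarith)
  have Db : HasDerivAt (fun y : ℝ => √(32 - 7 * y)) (-7 / (2 * √(32 - 7 * y))) y := by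
    have h := (((hasDerivAt_id y).const_mul 7).const_sub 32).sqrt (by simp only [id]; linarith)
    simpa using h
  have Ds := (Da.const_mul 3).add Db
  have Dd := Db.sub Da
  have Dg := (((Ds.mul (Ds.sqrt hs.ne')).mul (Dd.sqrt hd.ne')).div_const 32).const_sub (√2)
  rw [show fCHSH = _ from funext fCHSH_eq]
  refine Dg.congr_deriv ?_
  simp only [Pi.add_apply, Pi.sub_apply, Pi.mul_apply]
  have hp := Real.sqrt_pos.2 hs
  have hq := Real.sqrt_pos.2 hd
  have hp2 := Real.sq_sqrt hs.le
  have hq2 := Real.sq_sqrt hd.le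
  generalize √(3 * √y + √(32 - 7 * y)) = p at *
  generalize √(√(32 - 7 * y) - √y) = q at *
  generalize √y = a at *
  generalize √(32 - 7 * y) = b at *
  -- `a` and `b` are linear in `p² = s` and `q² = d`; eliminating them leaves an identity in `p, q`.
  obtain rfl : b = p ^ 2 - 3 * a := by linarith
  have ha' : a = (p ^ 2 - q ^ 2) / 4 := by linarith
  field_simp
  rw [ha']
  ring

theorem continuous_fCHSH : Continuous fCHSH := by
  rw [show fCHSH = _ from funext fCHSH_eq]
  fun_prop

theorem deriv_fCHSH_nonneg {y : ℝ} (hy : y ∈ Set.Ioo (1 : ℝ) 4) : 0 ≤ deriv fCHSH y := by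
  rw [(hasDerivAt_fCHSH hy).deriv]
  have ha : 0 < √y := Real.sqrt_pos.2 (by linarith [hy.1])
  have : √(32 - 7 * y) / √y ≤ 5 := (div_le_iff₀ ha).2 (sqrt_le_five_mul_sqrt hy.1.le)
  have : 0 ≤ 5 - √(32 - 7 * y) / √y := by linarith
  positivity

theorem monotoneOn_deriv_fCHSH : MonotoneOn (deriv fCHSH) (Set.Ioo (1 : ℝ) 4) := by
  intro x hx y hy hxy
  rw [(hasDerivAt_fCHSH hx).deriv, (hasDerivAt_fCHSH hy).deriv]
  have hx5 := sqrt_le_five_mul_sqrt hx.1.le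
  have hax : 0 < √x := Real.sqrt_pos.2 (by linarith [hx.1])
  have hay : 0 < √y := Real.sqrt_pos.2 (by linarith [hy.1])
  have hdx := sub_pos.2 (sqrt_lt_sqrt_of_mem hx)
  have hdy := sub_pos.2 (sqrt_lt_sqrt_of_mem hy)
  have haa : √x ≤ √y := Real.sqrt_le_sqrt hxy
  have hbb : √(32 - 7 * y) ≤ √(32 - 7 * x) := Real.sqrt_le_sqrt (by linarith)
  have hcross : √x * √(32 - 7 * y) ≤ √y * √(32 - 7 * x) := by gcongr
  have h1 : √(3 * √x + √(32 - 7 * x)) / √(√(32 - 7 * x) - √x)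
      ≤ √(3 * √y + √(32 - 7 * y)) / √(√(32 - 7 * y) - √y) := by
    rw [← Real.sqrt_div' _ hdx.le, ← Real.sqrt_div' _ hdy.le]
    apply Real.sqrt_le_sqrt
    rw [div_le_div_iff₀ hdx hdy]
    linarith
  have h2 : √(32 - 7 * y) / √y ≤ √(32 - 7 * x) / √x := by gcongr
  have h3 : √(32 - 7 * x) / √x ≤ 5 := (div_le_iff₀ hax).2 hx5
  have h4 : 0 ≤ 5 - √(32 - 7 * x) / √x := by linarith
  gcongr

theorem monotoneOn_fCHSH : MonotoneOn fCHSH (Set.Icc (1 : ℝ) 4) := by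
  refine monotoneOn_of_deriv_nonneg (convex_Icc 1 4) continuous_fCHSH.continuousOn ?_ ?_ <;>
    rw [interior_Icc]
  · exact fun y hy => (hasDerivAt_fCHSH hy).differentiableAt.differentiableWithinAt
  · exact fun y hy => deriv_fCHSH_nonneg hy

theorem convexOn_fCHSH : ConvexOn ℝ (Set.Icc (1 : ℝ) 4) fCHSH := by
  refine MonotoneOn.convexOn_of_deriv (convex_Icc 1 4) continuous_fCHSH.continuousOn ?_ ?_ <;>
    rw [interior_Icc]
  · exact fun y hy => (hasDerivAt_fCHSH hy).differentiableAt.differentiableWithinAt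
  · exact monotoneOn_deriv_fCHSH

theorem fCHSH_one : fCHSH 1 = 0 := by
  have h25 : √(32 - 7 * 1 : ℝ) = 5 := by
    rw [show (32 - 7 * 1 : ℝ) = 5 ^ 2 by norm_num, Real.sqrt_sq (by norm_num)]
  have h4 : √(4 : ℝ) = 2 := by
    rw [show (4 : ℝ) = 2 ^ 2 by norm_num, Real.sqrt_sq (by norm_num)]
  have h8 : √(8 : ℝ) = 2 * √2 := by
    rw [show (8 : ℝ) = 2 ^ 2 * 2 by norm_num, Real.sqrt_mul (by norm_num),
      Real.sqrt_sq (by norm_num)]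
  rw [fCHSH_eq, h25, Real.sqrt_one]
  norm_num [h4, h8]
  ring

theorem fCHSH_four : fCHSH 4 = √2 := by
  rw [fCHSH_eq, show (32 - 7 * 4 : ℝ) = 4 by norm_num]
  simp

theorem le_fCHSH : √2 - 1 ≤ fCHSH 2.95 := by
  have ha : √(2.95 : ℝ) ≤ 1.7176 := Real.sqrt_le_iff.2 (by norm_num)
  have ha' : 1.7175 ≤ √(2.95 : ℝ) := Real.le_sqrt_of_sq_le (by norm_num)
  have hb : √(32 - 7 * 2.95 : ℝ) ≤ 3.369 := Real.sqrt_le_iff.2 (by norm_num)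
  have hs : 3 * √(2.95 : ℝ) + √(32 - 7 * 2.95) ≤ 8.5218 := by linarith
  have hd : √(32 - 7 * 2.95 : ℝ) - √2.95 ≤ 1.6515 := by linarith
  have hp : √(3 * √(2.95 : ℝ) + √(32 - 7 * 2.95)) ≤ 2.9193 :=
    Real.sqrt_le_iff.2 ⟨by norm_num, hs.trans (by norm_num)⟩
  have hq : √(√(32 - 7 * 2.95 : ℝ) - √2.95) ≤ 1.2852 :=
    Real.sqrt_le_iff.2 ⟨by norm_num, hd.trans (by norm_num)⟩
  have h : (3 * √(2.95 : ℝ) + √(32 - 7 * 2.95)) * √(3 * √(2.95 : ℝ) + √(32 - 7 * 2.95)) *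
      √(√(32 - 7 * 2.95) - √2.95) ≤ 8.5218 * 2.9193 * 1.2852 := by gcongr
  rw [fCHSH_eq]
  linarith

/-- The function `f` is convex and nondecreasing on `[1,4]`, with
`f(1) = 0`, `f(4) = √2`, `f(2.95) ≥ √2 − 1`, and hence `f(y) ≥ √2 − 1` for all
`y ∈ [2.95, 4]`. -/
theorem statement_19 :
    ConvexOn ℝ (Set.Icc (1 : ℝ) 4) fCHSH ∧
    MonotoneOn fCHSH (Set.Icc (1 : ℝ) 4) ∧
    fCHSH 1 = 0 ∧
    fCHSH 4 = Real.sqrt 2 ∧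
    Real.sqrt 2 - 1 ≤ fCHSH 2.95 ∧
    (∀ y ∈ Set.Icc (2.95 : ℝ) 4, Real.sqrt 2 - 1 ≤ fCHSH y) := by
  refine ⟨convexOn_fCHSH, monotoneOn_fCHSH, fCHSH_one, fCHSH_four, le_fCHSH, fun y hy => ?_⟩
  exact le_fCHSH.trans (monotoneOn_fCHSH (by norm_num) ⟨by linarith [hy.1], hy.2⟩ hy.1)

end
end
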